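/- arXiv:2206.01608 — 2 statements merged into one kernel-verified Lean document; each statement's English description precedes it below -/
import Mathlib

section
/- Let A be a real n×n Hurwitz matrix, B a real n×m matrix, C a real m×n matrix, and G(s) := C (sI − A)⁻¹ B. Let λ₁, …, λ_r be distinct complex numbers with Re λ_i < 0, and l_i, r_i ∈ ℂ^m, closed under complex conjugation via a permutation σ with λ_{σ(i)} = conj(λ_i), l_{σ(i)} = conj(l_i), r_{σ(i)} = conj(r_i). Define H_r(s) := Σ_{i=1}^r l_i r_iᵀ / (s − λ_i). Then the H2 inner product satisfies (1/2π) ∫_ℝ trace( G(iω) · H_r(iω)^H ) dω = Σ_{i=1}^r l_iᵀ G(−λ_i) r_i, and this quantity is real. -/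
/-!
Let `f` be holomorphic on the open right half-plane, continuous up to the imaginary axis and
`O(1/s)`. If `h` is such a function and vanishes at a point `μ` with `Re μ > 0`, then
`h s / (μ - s)` has a removable singularity at `μ` and is `o(1/s)`, so Cauchy's theorem on large
rectangles shows that its integral along the imaginary axis is zero. Applying this to
`h s = f s - 2 (Re μ) f μ / (s + conj μ)` leaves a multiple of the Cauchy density,
`(μ - iω)⁻¹ (iω + conj μ)⁻¹ = |μ - iω|⁻²`, and gives `∫ f(iω) / (μ - iω) dω = 2π f(μ)`.

On the imaginary axis the conjugate of `1 / (iω - λ)` is `1 / (μ - iω)` with `μ = -conj λ`, so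
`⟨G, H_r⟩` is a sum of such integrals with `f = G`, one for each pole of `H_r`.
-/

open Matrix MeasureTheory

/-- A real square matrix is Hurwitz if all of its complex eigenvalues
have negative real part. -/
def IsHurwitz {n : ℕ} (A : Matrix (Fin n) (Fin n) ℝ) : Prop :=
  ∀ μ ∈ spectrum ℂ (A.map Complex.ofReal), μ.re < 0

section HalfPlane

open Complex Filter Asymptotics Bornology Set Topology
open scoped ComplexConjugate Interval Real

variable {E F : Type*} [NormedAddCommGroup E] [NormedSpace ℂ E]
  [NormedAddCommGroup F] [NormedSpace ℂ F]

lemma norm_boundary_rect_integral_le {f : ℂ → E} {c T : ℝ} (hT : 0 ≤ T)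
    (hf : ∀ s : ℂ, 0 ≤ s.re → T ≤ ‖s‖ → ‖f s‖ ≤ c) :
    ‖(∫ x in (0 : ℝ)..T, f (x + (-T : ℝ) * I)) - (∫ x in (0 : ℝ)..T, f (x + T * I)) +
      I • ∫ y in (-T)..T, f (T + y * I)‖ ≤ 4 * (c * T) := by
  have horizontal (y : ℝ) (hy : |y| = T) : ‖∫ x in (0 : ℝ)..T, f (x + y * I)‖ ≤ c * T := by
    have hside : ∀ x ∈ Ι 0 T, ‖f (x + y * I)‖ ≤ c := fun x hx ↦ by
      rw [uIoc_of_le hT] at hx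
      exact hf _ (by simpa using hx.1.le) (by simpa [hy] using abs_im_le_norm (x + y * I))
    simpa [abs_of_nonneg hT] using intervalIntegral.norm_integral_le_of_norm_le_const hside
  have vertical : ‖∫ y in (-T)..T, f (T + y * I)‖ ≤ c * |T - -T| :=
    intervalIntegral.norm_integral_le_of_norm_le_const fun y _ ↦ hf _ (by simpa using hT)
      (by simpa [abs_of_nonneg hT] using abs_re_le_norm (T + y * I))
  calc
    _ ≤ c * T + c * T + c * |T - -T| :=
      norm_add_le_of_le (norm_sub_le_of_le (horizontal _ (by rw [abs_neg, abs_of_nonneg hT]))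
        (horizontal _ (abs_of_nonneg hT))) (by rwa [norm_smul, norm_I, one_mul])
    _ = 4 * (c * T) := by
      rw [sub_neg_eq_add, abs_of_nonneg (by positivity)]
      ring

lemma norm_intervalIntegral_imaginaryAxis_le {f : ℂ → E} (hf : DiffContOnCl ℂ f {s | 0 < s.re})
    {c T : ℝ} (hT : 0 ≤ T) (hc : ∀ s : ℂ, 0 ≤ s.re → T ≤ ‖s‖ → ‖f s‖ ≤ c) :
    ‖∫ ω in (-T)..T, f (I * ω)‖ ≤ 4 * (c * T) := by
  have hcont : ContinuousOn f {s | 0 ≤ s.re} := closure_setOfPred_lt_re 0 ▸ hf.continuousOn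
  have hrect := integral_boundary_rect_eq_zero_of_continuousOn_of_differentiableOn f
    ((-T : ℝ) * I) (T + T * I)
    (hcont.mono fun s hs ↦ by
      have hre : s.re ∈ [[0, T]] := by simpa using hs.1
      rw [uIcc_of_le hT] at hre
      exact hre.1)
    (hf.differentiableOn.mono fun s hs ↦ by simpa [hT] using hs.1.1)
  simp only [add_re, add_im, mul_re, mul_im, ofReal_re, ofReal_im, I_re, I_im, mul_zero, mul_one,
    sub_zero, add_zero, zero_add, ofReal_zero, sub_eq_zero] at hrect
  calc
    _ = ‖I • ∫ y in (-T)..T, f (y * I)‖ := by simp_rw [norm_smul, norm_I, one_mul, mul_comm I]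
    _ ≤ 4 * (c * T) := hrect ▸ norm_boundary_rect_integral_le hT hc

lemma tendsto_intervalIntegral_imaginaryAxis_of_isLittleO {f : ℂ → E}
    (hf : DiffContOnCl ℂ f {s | 0 < s.re})
    (hlittle : f =o[cobounded ℂ ⊓ 𝓟 {s | 0 ≤ s.re}] fun s ↦ s⁻¹) :
    Tendsto (fun T : ℝ ↦ ∫ ω in (-T)..T, f (I * ω)) atTop (𝓝 0) := by
  refine NormedAddGroup.tendsto_nhds_zero.2 fun ε hε ↦ ?_
  have hbound : ∀ᶠ R : ℝ in atTop, ∀ s : ℂ, ‖s‖ = R → 0 ≤ s.re → ‖f s‖ ≤ ε / 8 * ‖s⁻¹‖ := by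
    have := eventually_inf_principal.1 (hlittle.def (by positivity : 0 < ε / 8))
    rwa [← comap_norm_atTop, eventually_comap] at this
  filter_upwards [eventually_forall_ge_atTop.2 hbound, eventually_gt_atTop 0] with T hT hT0
  have hc (s : ℂ) (hs : 0 ≤ s.re) (hTs : T ≤ ‖s‖) : ‖f s‖ ≤ ε / 8 * T⁻¹ := by
    refine (hT ‖s‖ hTs s rfl hs).trans ?_
    rw [norm_inv]
    gcongr
  calc
    _ ≤ 4 * (ε / 8 * T⁻¹ * T) := norm_intervalIntegral_imaginaryAxis_le hf hT0.le hc
    _ = ε / 2 := by field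
    _ < ε := half_lt_self hε

lemma integral_imaginaryAxis_eq_zero_of_isLittleO {f : ℂ → E}
    (hf : DiffContOnCl ℂ f {s | 0 < s.re})
    (hlittle : f =o[cobounded ℂ ⊓ 𝓟 {s | 0 ≤ s.re}] fun s ↦ s⁻¹)
    (hint : Integrable fun ω : ℝ ↦ f (I * ω)) : ∫ ω : ℝ, f (I * ω) = 0 :=
  tendsto_nhds_unique
    (intervalIntegral_tendsto_integral hint tendsto_neg_atTop_atBot tendsto_id)
    (tendsto_intervalIntegral_imaginaryAxis_of_isLittleO hf hlittle)

lemma isBigO_inv_const_sub {𝕜 : Type*} [NontriviallyNormedField 𝕜] [CompleteSpace 𝕜] (μ : 𝕜) :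
    (fun s ↦ (μ - s)⁻¹) =O[cobounded 𝕜] fun s ↦ s⁻¹ := by
  refine (spectrum.resolvent_isBigO_inv (𝕜 := 𝕜) μ).neg_left.congr_left fun s ↦ ?_
  simp [resolvent, ← inv_neg]

lemma inv_sub_mul_inv_add_conj_eq_cauchyPDFReal {μ : ℂ} (hμ : 0 < μ.re) (ω : ℝ) :
    (μ - I * ω)⁻¹ * (I * ω + conj μ)⁻¹ =
      ((π / μ.re * ProbabilityTheory.cauchyPDFReal μ.im μ.re.toNNReal ω : ℝ) : ℂ) := by
  have hnormSq : (μ - I * ω) * (I * ω + conj μ) = (((ω - μ.im) ^ 2 + μ.re ^ 2 : ℝ) : ℂ) := by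
    apply Complex.ext <;> simp [pow_two] <;> ring
  rw [← mul_inv, hnormSq, ← ofReal_inv, ProbabilityTheory.cauchyPDFReal_def,
    Real.coe_toNNReal _ hμ.le]
  congr 1
  field

lemma integral_inv_sub_mul_inv_add_conj {μ : ℂ} (hμ : 0 < μ.re) :
    ∫ ω : ℝ, (μ - I * ω)⁻¹ * (I * ω + conj μ)⁻¹ = (π / μ.re : ℝ) := by
  simp_rw [inv_sub_mul_inv_add_conj_eq_cauchyPDFReal hμ]
  rw [integral_complex_ofReal, integral_const_mul,
    ProbabilityTheory.integral_cauchyPDFReal_eq_one _ (Real.toNNReal_pos.2 hμ).ne', mul_one]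

/-- A stable, strictly proper transfer function with values in `E`: holomorphic on the open right
half-plane, continuous up to the imaginary axis, and `O(1/s)` at infinity. It is not required to
be rational, and its values on the left half-plane are irrelevant. -/
structure StableStrictlyProper (f : ℂ → E) : Prop where
  diffContOnCl : DiffContOnCl ℂ f {s | 0 < s.re}
  isBigO_inv : f =O[cobounded ℂ ⊓ 𝓟 {s | 0 ≤ s.re}] fun s ↦ s⁻¹

namespace StableStrictlyProper

variable {f g : ℂ → E} {μ : ℂ}

protected lemma continuousOn (hf : StableStrictlyProper f) : ContinuousOn f {s | 0 ≤ s.re} :=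
  closure_setOfPred_lt_re 0 ▸ hf.diffContOnCl.continuousOn

protected lemma congr (hf : StableStrictlyProper f) (h : EqOn g f {s | 0 ≤ s.re}) :
    StableStrictlyProper g where
  diffContOnCl :=
    ⟨hf.diffContOnCl.differentiableOn.congr fun _ hs ↦ h (le_of_lt (α := ℝ) hs),
      hf.diffContOnCl.continuousOn.congr (by rwa [closure_setOfPred_lt_re])⟩
  isBigO_inv := hf.isBigO_inv.congr'
    (h.symm.eventuallyEq_of_mem (mem_inf_of_right (mem_principal_self _))) .rfl

protected lemma sub (hf : StableStrictlyProper f) (hg : StableStrictlyProper g) :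
    StableStrictlyProper (f - g) :=
  ⟨hf.diffContOnCl.sub hg.diffContOnCl, hf.isBigO_inv.sub hg.isBigO_inv⟩

lemma clm_comp (hf : StableStrictlyProper f) (L : E →L[ℂ] F) :
    StableStrictlyProper fun s ↦ L (f s) :=
  ⟨L.differentiable.comp_diffContOnCl hf.diffContOnCl,
    (L.isBigO_comp f _).trans hf.isBigO_inv⟩

protected lemma resolvent {𝔸 : Type*} [NormedRing 𝔸] [NormedAlgebra ℂ 𝔸] [CompleteSpace 𝔸]
    {a : 𝔸} (ha : ∀ μ ∈ spectrum ℂ a, μ.re < 0) :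
    StableStrictlyProper (resolvent a : ℂ → 𝔸) where
  diffContOnCl := DifferentiableOn.diffContOnCl fun s hs ↦ by
    rw [closure_setOfPred_lt_re] at hs
    have hres : s ∈ resolventSet ℂ a := not_not.1 fun hspec ↦ (ha s hspec).not_ge hs
    exact (spectrum.hasDerivAt_resolvent_const_left hres).differentiableAt.differentiableWithinAt
  isBigO_inv := (spectrum.resolvent_isBigO_inv a).mono inf_le_left

lemma inv_add {ν : ℂ} (hν : 0 < ν.re) : StableStrictlyProper fun s : ℂ ↦ (s + ν)⁻¹ := by
  have hspec : ∀ μ ∈ spectrum ℂ (-ν), μ.re < 0 := fun μ hμ ↦ by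
    rw [show spectrum ℂ (-ν) = {-ν} from spectrum.scalar_eq (-ν)] at hμ
    simpa [mem_singleton_iff.1 hμ] using hν
  have hresolvent : resolvent (-ν) = fun s : ℂ ↦ (s + ν)⁻¹ := by
    ext s
    simp [resolvent]
  exact hresolvent ▸ .resolvent hspec

lemma continuous_imaginaryAxis (hf : StableStrictlyProper f) :
    Continuous fun ω : ℝ ↦ f (I * ω) :=
  hf.continuousOn.comp_continuous (by fun_prop) (by simp)

lemma integrable_inv_sub_smul (hf : StableStrictlyProper f) (hμ : 0 < μ.re) :
    Integrable fun ω : ℝ ↦ (μ - I * ω)⁻¹ • f (I * ω) := by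
  have hne (ω : ℝ) : μ - I * ω ≠ 0 := fun h ↦ hμ.ne' (by simpa using congrArg re h)
  have hcont : Continuous fun ω : ℝ ↦ (μ - I * ω)⁻¹ • f (I * ω) :=
    (Continuous.inv₀ (by fun_prop) hne).smul hf.continuous_imaginaryAxis
  have haxis : Tendsto (fun ω : ℝ ↦ I * (ω : ℂ)) (cocompact ℝ)
      (cobounded ℂ ⊓ 𝓟 {s | 0 ≤ s.re}) := by
    refine tendsto_inf.2 ⟨?_, tendsto_principal.2 (.of_forall fun ω ↦ by simp)⟩
    rw [← tendsto_norm_atTop_iff_cobounded]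
    exact (tendsto_norm_cocompact_atTop (E := ℝ)).congr fun ω ↦ by simp
  have hdecay : (fun ω : ℝ ↦ (I * (ω : ℂ))⁻¹ • (I * (ω : ℂ))⁻¹) =O[cocompact ℝ]
      fun ω : ℝ ↦ (1 + ω ^ 2)⁻¹ := by
    refine .of_bound 2 ?_
    filter_upwards [tendsto_norm_cocompact_atTop.eventually_ge_atTop 1] with ω hω
    have hsq : 1 ≤ ω ^ 2 := one_le_sq_iff_one_le_abs _ |>.2 hω
    calc
      _ = 2 * (2 * ω ^ 2)⁻¹ := by
        rw [norm_smul, norm_inv, norm_mul, norm_I, one_mul, norm_real, Real.norm_eq_abs, ← mul_inv,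
          abs_mul_abs_self]
        ring
      _ ≤ 2 * (1 + ω ^ 2)⁻¹ := by
        gcongr
        linarith
      _ = 2 * ‖(1 + ω ^ 2)⁻¹‖ := by rw [Real.norm_of_nonneg (by positivity)]
  exact hcont.locallyIntegrable.integrable_of_isBigO_cocompact
    ((((isBigO_inv_const_sub μ).mono inf_le_left).smul hf.isBigO_inv |>.comp_tendsto haxis).trans
      hdecay)
    (integrable_inv_one_add_sq.integrableAtFilter _)

lemma integral_inv_sub_smul_of_eq_zero [CompleteSpace E] (hf : StableStrictlyProper f)
    (hμ : 0 < μ.re) (hzero : f μ = 0) : ∫ ω : ℝ, (μ - I * ω)⁻¹ • f (I * ω) = 0 := by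
  have hnhds : {s : ℂ | 0 < s.re} ∈ 𝓝 μ := (isOpen_lt continuous_const continuous_re).mem_nhds hμ
  have hdiff : DiffContOnCl ℂ (dslope f μ) {s | 0 < s.re} :=
    ⟨(differentiableOn_dslope hnhds).2 hf.diffContOnCl.differentiableOn,
      (continuousOn_dslope (mem_of_superset hnhds subset_closure)).2
        ⟨hf.diffContOnCl.continuousOn, hf.diffContOnCl.differentiableAt' hnhds⟩⟩
  have hquotient {s : ℂ} (hs : s ≠ μ) : (μ - s)⁻¹ • f s = -dslope f μ s := by
    rw [dslope_of_ne _ hs, slope_def_module, hzero, sub_zero, ← neg_smul, ← inv_neg, neg_sub]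
  have hvanish : f =o[cobounded ℂ ⊓ 𝓟 {s | 0 ≤ s.re}] fun _ ↦ (1 : ℂ) :=
    hf.isBigO_inv.trans_isLittleO <|
      (isLittleO_one_iff ℂ).2 (tendsto_inv₀_cobounded.mono_left inf_le_left)
  have hlittle : dslope f μ =o[cobounded ℂ ⊓ 𝓟 {s | 0 ≤ s.re}] fun s ↦ s⁻¹ := by
    refine (((isBigO_inv_const_sub μ).mono inf_le_left).smul_isLittleO hvanish).neg_left.congr'
      ?_ (.of_forall fun s ↦ by simp)
    filter_upwards [mem_inf_of_left (isBounded_singleton (x := μ))] with s hs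
    rw [hquotient hs, neg_neg]
  have hintegrand (ω : ℝ) : (μ - I * ω)⁻¹ • f (I * ω) = -dslope f μ (I * ω) :=
    hquotient fun h ↦ hμ.ne (by simpa using congrArg re h)
  have hint : Integrable fun ω : ℝ ↦ dslope f μ (I * ω) := by
    simpa [hintegrand] using (hf.integrable_inv_sub_smul hμ).neg
  simp_rw [hintegrand]
  rw [integral_neg, integral_imaginaryAxis_eq_zero_of_isLittleO hdiff hlittle hint, neg_zero]

theorem integral_inv_sub_smul [CompleteSpace E] (hf : StableStrictlyProper f) (hμ : 0 < μ.re) :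
    ∫ ω : ℝ, (μ - I * ω)⁻¹ • f (I * ω) = (2 * π : ℂ) • f μ := by
  have hkernel : StableStrictlyProper fun s : ℂ ↦ (s + conj μ)⁻¹ := inv_add (by simpa using hμ)
  let g : ℂ → E := fun s ↦ (s + conj μ)⁻¹ • (2 * μ.re : ℂ) • f μ
  have hg : StableStrictlyProper g :=
    hkernel.clm_comp (.toSpanSingleton ℂ ((2 * μ.re : ℂ) • f μ))
  have hre : (μ.re : ℂ) ≠ 0 := ofReal_ne_zero.2 hμ.ne'
  have hzero : (f - g) μ = 0 := by
    rw [Pi.sub_apply, sub_eq_zero]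
    simp only [g, add_conj, ofReal_mul, ofReal_ofNat, inv_smul_smul₀ (mul_ne_zero two_ne_zero hre)]
  calc
    _ = (∫ ω : ℝ, (μ - I * ω)⁻¹ • (f - g) (I * ω)) + ∫ ω : ℝ, (μ - I * ω)⁻¹ • g (I * ω) := by
      rw [← integral_add ((hf.sub hg).integrable_inv_sub_smul hμ) (hg.integrable_inv_sub_smul hμ)]
      simp [← smul_add]
    _ = (∫ ω : ℝ, (μ - I * ω)⁻¹ * (I * ω + conj μ)⁻¹) • (2 * μ.re : ℂ) • f μ := by
      rw [(hf.sub hg).integral_inv_sub_smul_of_eq_zero hμ hzero, zero_add, ← integral_smul_const]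
      simp_rw [g, mul_smul]
    _ = (2 * π : ℂ) • f μ := by
      rw [integral_inv_sub_mul_inv_add_conj hμ, smul_smul]
      congr 1
      push_cast
      field

end StableStrictlyProper

end HalfPlane

section TransferFunction

open scoped ComplexConjugate Matrix.Norms.Operator

variable {m n p : Type*} [Fintype n] [DecidableEq n]

/-- The transfer function `C (sI - A)⁻¹ B` of the linear system with state matrix `A`, input matrix
`B` and output matrix `C`. At the poles `s ∈ spectrum ℂ A` it is zero. -/
noncomputable def transferFunction (A : Matrix n n ℂ) (B : Matrix n p ℂ) (C : Matrix m n ℂ)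
    (s : ℂ) : Matrix m p ℂ :=
  C * (s • (1 : Matrix n n ℂ) - A)⁻¹ * B

lemma stableStrictlyProper_of_eqOn_transferFunction [Fintype m] [Fintype p] {A : Matrix n n ℂ}
    {B : Matrix n p ℂ} {C : Matrix m n ℂ} {G : ℂ → Matrix m p ℂ}
    (hA : ∀ μ ∈ spectrum ℂ A, μ.re < 0)
    (hG : Set.EqOn G (transferFunction A B C) {s | 0 ≤ s.re}) : StableStrictlyProper G := by
  have : CompleteSpace (Matrix n n ℂ) := FiniteDimensional.complete ℂ _
  have hcomp := (StableStrictlyProper.resolvent hA).clm_comp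
    (mulRightLinearMap m ℂ B ∘ₗ mulLeftLinearMap n ℂ C).toContinuousLinearMap
  refine hcomp.congr fun s hs ↦ ?_
  rw [hG hs, transferFunction, nonsing_inv_eq_ringInverse, ← Algebra.algebraMap_eq_smul_one]
  rfl

lemma map_conj_nonsing_inv {R : Type*} [CommRing R] [StarRing R] (A : Matrix n n R) :
    A⁻¹.map conj = (A.map conj)⁻¹ := by
  have hmap (M : Matrix n n R) : M.map conj = Mᴴᵀ := rfl
  rw [hmap, hmap, conjTranspose_nonsing_inv, transpose_nonsing_inv]

lemma transferFunction_conj (A : Matrix n n ℂ) (B : Matrix n p ℂ) (C : Matrix m n ℂ) (s : ℂ) :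
    transferFunction (A.map conj) (B.map conj) (C.map conj) (conj s) =
      (transferFunction A B C s).map conj := by
  have hsub : conj s • (1 : Matrix n n ℂ) - A.map conj =
      (s • (1 : Matrix n n ℂ) - A).map conj := by
    ext i j
    simp [one_apply, apply_ite conj]
  rw [transferFunction, transferFunction, Matrix.map_mul, Matrix.map_mul, map_conj_nonsing_inv,
    hsub]

lemma transferFunction_conj_of_real (A : Matrix n n ℝ) (B : Matrix n p ℝ) (C : Matrix m n ℝ)
    (s : ℂ) :
    transferFunction (A.map Complex.ofReal) (B.map Complex.ofReal) (C.map Complex.ofReal)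
        (conj s) =
      (transferFunction (A.map Complex.ofReal) (B.map Complex.ofReal) (C.map Complex.ofReal)
        s).map conj := by
  simp [← transferFunction_conj, Function.comp_def]

end TransferFunction

section PoleResidue

open scoped ComplexConjugate Matrix.Norms.Operator

variable {m p ι : Type*} [Fintype m] [Fintype p] [Fintype ι] {G : ℂ → Matrix m p ℂ}
  {lam : ι → ℂ} {l : ι → m → ℂ} {ρ : ι → p → ℂ}

/-- The rational function `∑ᵢ lᵢ ρᵢᵀ / (s - λᵢ)` with poles `λᵢ` and rank-one residues;
at `s = λᵢ` the `i`-th summand is zero. -/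
noncomputable def poleResidue (lam : ι → ℂ) (l : ι → m → ℂ) (ρ : ι → p → ℂ) (s : ℂ) :
    Matrix m p ℂ :=
  ∑ i, (s - lam i)⁻¹ • vecMulVec (l i) (ρ i)

/-- The H2 inner product `(1/2π) ∫ trace (F(iω) G(iω)ᴴ) dω`; it is zero when the integrand is not
integrable. -/
noncomputable def h2Inner (F G : ℂ → Matrix m p ℂ) : ℂ :=
  ((1 / (2 * Real.pi) : ℝ) : ℂ) *
    ∫ ω : ℝ, (F (Complex.I * ω) * (G (Complex.I * ω))ᴴ).trace

lemma trace_mul_conjTranspose_poleResidue (M : Matrix m p ℂ) (ω : ℝ) :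
    (M * (poleResidue lam l ρ (Complex.I * ω))ᴴ).trace =
      ∑ i, (-conj (lam i) - Complex.I * ω)⁻¹ • (star (l i) ⬝ᵥ (M *ᵥ star (ρ i))) := by
  rw [poleResidue, conjTranspose_sum, Matrix.mul_sum, trace_sum]
  refine Finset.sum_congr rfl fun i _ ↦ ?_
  have hpole : star (Complex.I * ω - lam i) = -conj (lam i) - Complex.I * ω := by
    simp only [Complex.star_def, map_sub, map_mul, Complex.conj_I, Complex.conj_ofReal]
    ring
  rw [conjTranspose_smul, conjTranspose_vecMulVec, Matrix.mul_smul, trace_smul, mul_vecMulVec,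
    trace_vecMulVec, dotProduct_comm, star_inv₀, hpole]

lemma StableStrictlyProper.dotProduct_mulVec (hG : StableStrictlyProper G) (u : m → ℂ)
    (v : p → ℂ) : StableStrictlyProper fun s ↦ u ⬝ᵥ (G s *ᵥ v) :=
  hG.clm_comp
    (dotProductBilin ℂ ℂ u ∘ₗ (mulVecBilin ℂ ℂ).flip v).toContinuousLinearMap

lemma integrable_trace_mul_conjTranspose_poleResidue (hG : StableStrictlyProper G)
    (hstab : ∀ i, (lam i).re < 0) :
    Integrable fun ω : ℝ ↦
      (G (Complex.I * ω) * (poleResidue lam l ρ (Complex.I * ω))ᴴ).trace := by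
  simp_rw [trace_mul_conjTranspose_poleResidue]
  exact integrable_finsetSum _ fun i _ ↦
    (hG.dotProduct_mulVec _ _).integrable_inv_sub_smul (by simpa using hstab i)

lemma h2Inner_poleResidue (hG : StableStrictlyProper G) (hstab : ∀ i, (lam i).re < 0) :
    h2Inner G (poleResidue lam l ρ) =
      ∑ i, star (l i) ⬝ᵥ (G (-conj (lam i)) *ᵥ star (ρ i)) := by
  have hscale : ((1 / (2 * Real.pi) : ℝ) : ℂ) * (2 * Real.pi) = 1 :=
    mod_cast one_div_mul_cancel Real.two_pi_pos.ne'
  have hμ (i : ι) : 0 < (-conj (lam i)).re := by simpa using hstab i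
  have hproper (i : ι) := hG.dotProduct_mulVec (star (l i)) (star (ρ i))
  simp_rw [h2Inner, trace_mul_conjTranspose_poleResidue]
  rw [integral_finsetSum _ fun i _ ↦ (hproper i).integrable_inv_sub_smul (hμ i), Finset.mul_sum]
  refine Finset.sum_congr rfl fun i _ ↦ ?_
  rw [(hproper i).integral_inv_sub_smul (hμ i), smul_eq_mul, ← mul_assoc, hscale, one_mul]

lemma sum_star_dotProduct_mulVec_eq_of_conj_closed (σ : Equiv.Perm ι)
    (hσlam : ∀ i, lam (σ i) = conj (lam i)) (hσl : ∀ i, l (σ i) = star (l i))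
    (hσρ : ∀ i, ρ (σ i) = star (ρ i)) :
    ∑ i, star (l i) ⬝ᵥ (G (-conj (lam i)) *ᵥ star (ρ i)) = ∑ i, l i ⬝ᵥ (G (-lam i) *ᵥ ρ i) := by
  simp_rw [← hσlam, ← hσl, ← hσρ]
  exact Equiv.sum_comp σ fun i ↦ l i ⬝ᵥ (G (-lam i) *ᵥ ρ i)

lemma conj_sum_dotProduct_mulVec (hGconj : ∀ s : ℂ, 0 < s.re → G (conj s) = (G s).map conj)
    (hstab : ∀ i, (lam i).re < 0) :
    conj (∑ i, l i ⬝ᵥ (G (-lam i) *ᵥ ρ i)) =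
      ∑ i, star (l i) ⬝ᵥ (G (-conj (lam i)) *ᵥ star (ρ i)) := by
  rw [map_sum]
  refine Finset.sum_congr rfl fun i _ ↦ ?_
  rw [RingHom.map_dotProduct, ← map_neg conj, hGconj _ (by simpa using hstab i)]
  congr 1
  ext j
  exact RingHom.map_mulVec conj _ _ j

theorem stmt_6_general (hG : StableStrictlyProper G)
    (hGconj : ∀ s : ℂ, 0 < s.re → G (conj s) = (G s).map conj)
    (hstab : ∀ i, (lam i).re < 0) (σ : Equiv.Perm ι) (hσlam : ∀ i, lam (σ i) = conj (lam i))
    (hσl : ∀ i, l (σ i) = star (l i)) (hσρ : ∀ i, ρ (σ i) = star (ρ i)) :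
    Integrable (fun ω : ℝ ↦
      (G (Complex.I * ω) * (poleResidue lam l ρ (Complex.I * ω))ᴴ).trace) ∧
    h2Inner G (poleResidue lam l ρ) = ∑ i, l i ⬝ᵥ (G (-lam i) *ᵥ ρ i) ∧
    (∑ i, l i ⬝ᵥ (G (-lam i) *ᵥ ρ i)).im = 0 := by
  have hsum := sum_star_dotProduct_mulVec_eq_of_conj_closed (G := G) σ hσlam hσl hσρ
  exact ⟨integrable_trace_mul_conjTranspose_poleResidue hG hstab,
    (h2Inner_poleResidue hG hstab).trans hsum,
    Complex.conj_eq_iff_im.1 ((conj_sum_dotProduct_mulVec hGconj hstab).trans hsum)⟩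

end PoleResidue

/-- Pole–residue evaluation of the H2 inner product: for `G(s) = C (sI − A)⁻¹ B`
with `A` Hurwitz and `H_r(s) = Σᵢ lᵢ rᵢᵀ/(s − λᵢ)` with distinct stable poles and
residue data closed under complex conjugation,
`(1/2π) ∫_ℝ trace(G(iω) H_r(iω)ᴴ) dω = Σᵢ lᵢᵀ G(−λᵢ) rᵢ`, and this quantity is real. -/
theorem stmt_6 {n m r : ℕ} (A : Matrix (Fin n) (Fin n) ℝ) (hA : IsHurwitz A)
    (B : Matrix (Fin n) (Fin m) ℝ) (C : Matrix (Fin m) (Fin n) ℝ)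
    (G : ℂ → Matrix (Fin m) (Fin m) ℂ)
    (hG : ∀ s : ℂ, s ∉ spectrum ℂ (A.map Complex.ofReal) →
      G s = C.map Complex.ofReal *
        (s • (1 : Matrix (Fin n) (Fin n) ℂ) - A.map Complex.ofReal)⁻¹ *
        B.map Complex.ofReal)
    (lam : Fin r → ℂ)
    (hdist : Function.Injective lam)
    (hstab : ∀ i, (lam i).re < 0)
    (l ρ : Fin r → (Fin m → ℂ))
    (σ : Equiv.Perm (Fin r))
    (hσlam : ∀ i, lam (σ i) = starRingEnd ℂ (lam i))
    (hσl : ∀ i, l (σ i) = star (l i))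
    (hσρ : ∀ i, ρ (σ i) = star (ρ i))
    (Hr : ℂ → Matrix (Fin m) (Fin m) ℂ)
    (hHr : ∀ s : ℂ, Hr s = ∑ i : Fin r, (s - lam i)⁻¹ • Matrix.vecMulVec (l i) (ρ i)) :
    Integrable (fun ω : ℝ =>
      (G (Complex.I * (ω : ℂ)) * (Hr (Complex.I * (ω : ℂ)))ᴴ).trace) volume ∧
    ((1 / (2 * Real.pi) : ℝ) : ℂ) *
        (∫ ω : ℝ, (G (Complex.I * (ω : ℂ)) * (Hr (Complex.I * (ω : ℂ)))ᴴ).trace) =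
      ∑ i : Fin r, l i ⬝ᵥ (G (-(lam i)) *ᵥ ρ i) ∧
    (∑ i : Fin r, l i ⬝ᵥ (G (-(lam i)) *ᵥ ρ i)).im = 0 := by
  have hGtf : Set.EqOn G (transferFunction (A.map Complex.ofReal) (B.map Complex.ofReal)
      (C.map Complex.ofReal)) {s | 0 ≤ s.re} :=
    fun s hs ↦ hG s fun hspec ↦ (hA s hspec).not_ge hs
  have hGconj (s : ℂ) (hs : 0 < s.re) : G (starRingEnd ℂ s) = (G s).map (starRingEnd ℂ) := by
    rw [hGtf hs.le, hGtf (by simpa using hs.le), transferFunction_conj_of_real]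
  obtain rfl : Hr = poleResidue lam l ρ := funext hHr
  exact stmt_6_general (stableStrictlyProper_of_eqOn_transferFunction hA hGtf) hGconj hstab
    σ hσlam hσl hσρ
end

section
/- Let A be a real n×n Hurwitz matrix, B a real n×m matrix, C a real m×n matrix, and G(s) := C (sI − A)⁻¹ B. Let λ₁, …, λ_r be distinct complex numbers with Re λ_i < 0, λ_j + λ_k ≠ 0 for all j, k, and l_i, r_i ∈ ℂ^m. Define F̂ := −2 Σ_{i=1}^r l_iᵀ G(−λ_i) r_i + Σ_{j=1}^r Σ_{k=1}^r (l_jᵀ l_k)(r_kᵀ r_j)/(−λ_j − λ_k), and H_r(s) := Σ_{k=1}^r l_k r_kᵀ/(s − λ_k). Then F̂, viewed as a function of the single variable l_i ∈ ℂ^m with all other arguments fixed, is differentiable, and its derivative at l_i is the ℂ-linear functional v ↦ 2 r_iᵀ ( H_r(−λ_i) − G(−λ_i) )ᵀ v. -/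
open Matrix

/-! The weights `(rₖᵀ rⱼ) / (−λⱼ − λₖ)` in the double sum of `F̂` are symmetric in `j` and `k`. So
`F̂` is a linear functional plus a symmetric quadratic form in the tuple `(lⱼ)ⱼ`, the two halves of
the product rule coincide, and the derivative of the quadratic form pairs the increment of `lⱼ` with
twice `∑ₖ (rₖᵀ rⱼ) / (−λⱼ − λₖ) lₖ = H_r(−λⱼ) rⱼ`. -/

section PoleResidue

variable {K ι p q : Type*} [Field K] [Fintype ι] [Fintype q]

/-- The transfer function `H_r(s) = ∑ₖ lₖ rₖᵀ / (s − λₖ)` with poles `lam`, left residue directions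
`l` and right residue directions `ρ`. -/
def poleResidueTransfer (lam : ι → K) (l : ι → p → K) (ρ : ι → q → K) (s : K) : Matrix p q K :=
  ∑ k, (s - lam k)⁻¹ • vecMulVec (l k) (ρ k)

/-- The pole–residue objective `F̂`. For real stable systems `G` and `H_r` over `ℂ` it is
`‖G − H_r‖² − ‖G‖²` in the `H2` norm. -/
def poleResidueObjective [Fintype p] (G : K → Matrix p q K) (lam : ι → K) (l : ι → p → K)
    (ρ : ι → q → K) : K :=
  -2 * ∑ j, l j ⬝ᵥ (G (-lam j) *ᵥ ρ j) +
    ∑ j, ∑ k, (l j ⬝ᵥ l k) * (ρ k ⬝ᵥ ρ j) / (-lam j - lam k)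

theorem poleResidueTransfer_mulVec (lam : ι → K) (l : ι → p → K) (ρ : ι → q → K) (s : K)
    (v : q → K) :
    poleResidueTransfer lam l ρ s *ᵥ v = ∑ k, ((ρ k ⬝ᵥ v) / (s - lam k)) • l k := by
  simp only [poleResidueTransfer, sum_mulVec, smul_mulVec, vecMulVec_mulVec, op_smul_eq_smul,
    smul_smul, div_eq_inv_mul]

end PoleResidue

section DotProductCLM

variable {R p : Type*} [CommSemiring R] [TopologicalSpace R] [IsTopologicalSemiring R] [Fintype p]

/-- The continuous linear functional `v ↦ uᵀ v`, turning a gradient `u` into a Fréchet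
derivative. -/
def dotProductCLM (u : p → R) : (p → R) →L[R] R where
  toLinearMap := dotProductBilin R R u
  cont := continuous_const.dotProduct continuous_id

@[simp]
theorem dotProductCLM_apply (u v : p → R) : dotProductCLM u v = u ⬝ᵥ v := rfl

end DotProductCLM

section Derivative

variable {𝕜 ι p q : Type*} [NontriviallyNormedField 𝕜] [Fintype ι] [Fintype p] [Fintype q]

theorem hasFDerivAt_dotProduct {E : Type*} [NormedAddCommGroup E] [NormedSpace 𝕜 E]
    {x y : E → p → 𝕜} {x' y' : E →L[𝕜] p → 𝕜} {e : E}
    (hx : HasFDerivAt x x' e) (hy : HasFDerivAt y y' e) :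
    HasFDerivAt (fun t => x t ⬝ᵥ y t)
      (dotProductCLM (x e) ∘L y' + dotProductCLM (y e) ∘L x') e := by
  refine (HasFDerivAt.fun_sum fun a _ =>
    (hasFDerivAt_pi'.1 hx a).fun_mul (hasFDerivAt_pi'.1 hy a)).congr_fderiv ?_
  ext v
  simp [dotProduct, Finset.sum_add_distrib]

theorem hasFDerivAt_sum_dotProduct_const (g l : ι → p → 𝕜) :
    HasFDerivAt (fun x : ι → p → 𝕜 => ∑ j, x j ⬝ᵥ g j)
      (∑ j, dotProductCLM (g j) ∘L ContinuousLinearMap.proj j) l := by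
  refine HasFDerivAt.fun_sum fun j _ => ?_
  simpa using hasFDerivAt_dotProduct (hasFDerivAt_apply j l) (hasFDerivAt_const (g j) l)

theorem hasFDerivAt_sum_sum_dotProduct_mul {w : ι → ι → 𝕜} (w_symm : ∀ j k, w j k = w k j)
    (l : ι → p → 𝕜) :
    HasFDerivAt (fun x : ι → p → 𝕜 => ∑ j, ∑ k, (x j ⬝ᵥ x k) * w j k)
      (∑ j, dotProductCLM ((2 : 𝕜) • ∑ k, w j k • l k) ∘L ContinuousLinearMap.proj j) l := by
  refine (HasFDerivAt.fun_sum fun j _ => HasFDerivAt.fun_sum fun k _ =>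
    (hasFDerivAt_dotProduct (hasFDerivAt_apply j l) (hasFDerivAt_apply k l)).mul_const
      (w j k)).congr_fderiv (ContinuousLinearMap.ext fun δ => ?_)
  have halves_eq : ∑ j, ∑ k, w j k * (l j ⬝ᵥ δ k) = ∑ j, ∑ k, w j k * (l k ⬝ᵥ δ j) := by
    rw [Finset.sum_comm]
    exact Finset.sum_congr rfl fun j _ => Finset.sum_congr rfl fun k _ => by rw [w_symm]
  simp [Finset.sum_add_distrib, halves_eq, sum_dotProduct, Finset.mul_sum, two_mul]

theorem hasFDerivAt_comp_update [DecidableEq ι] {E : ι → Type*} {F : Type*}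
    [∀ j, NormedAddCommGroup (E j)] [∀ j, NormedSpace 𝕜 (E j)] [NormedAddCommGroup F]
    [NormedSpace 𝕜 F] {f : (∀ j, E j) → F} {f' : ∀ j, E j →L[𝕜] F} {x : ∀ j, E j}
    (hf : HasFDerivAt f (∑ j, f' j ∘L ContinuousLinearMap.proj j) x) (i : ι) :
    HasFDerivAt (fun v => f (Function.update x i v)) (f' i) (x i) := by
  rw [← Function.update_eq_self i x] at hf
  refine (hf.comp (x i) (hasFDerivAt_update x (x i))).congr_fderiv
    (ContinuousLinearMap.ext fun v => ?_)
  simp only [ContinuousLinearMap.comp_apply, _root_.sum_apply, ContinuousLinearMap.proj_apply,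
    ContinuousLinearMap.pi_apply]
  rw [Finset.sum_eq_single i (fun j _ hj => by simp [hj]) (by simp)]
  simp

theorem hasFDerivAt_poleResidueObjective (G : 𝕜 → Matrix p q 𝕜) (lam : ι → 𝕜) (l : ι → p → 𝕜)
    (ρ : ι → q → 𝕜) :
    HasFDerivAt (fun x => poleResidueObjective G lam x ρ)
      (∑ j, dotProductCLM
        ((2 : 𝕜) • ((poleResidueTransfer lam l ρ (-lam j) - G (-lam j)) *ᵥ ρ j)) ∘L
          ContinuousLinearMap.proj j) l := by
  have weight_symm (j k : ι) :
      (ρ k ⬝ᵥ ρ j) / (-lam j - lam k) = (ρ j ⬝ᵥ ρ k) / (-lam k - lam j) := by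
    rw [dotProduct_comm, neg_sub_comm]
  have linear_part :=
    (hasFDerivAt_sum_dotProduct_const (fun j => G (-lam j) *ᵥ ρ j) l).const_mul (-2)
  have quadratic_part := hasFDerivAt_sum_sum_dotProduct_mul weight_symm l
  simp only [← poleResidueTransfer_mulVec, ← mul_div_assoc] at quadratic_part
  refine (linear_part.add quadratic_part).congr_fderiv (ContinuousLinearMap.ext fun δ => ?_)
  simp only [_root_.add_apply, _root_.smul_apply, _root_.sum_apply,
    ContinuousLinearMap.comp_apply, ContinuousLinearMap.proj_apply, dotProductCLM_apply,
    smul_eq_mul, smul_dotProduct, sub_mulVec, sub_dotProduct, mul_sub, Finset.sum_sub_distrib,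
    ← Finset.mul_sum]
  ring

theorem stmt_12_general [DecidableEq ι] (G : 𝕜 → Matrix p q 𝕜) (lam : ι → 𝕜)
    (_hsum : ∀ j k, lam j + lam k ≠ 0) (l : ι → p → 𝕜) (ρ : ι → q → 𝕜) (i : ι) :
    HasFDerivAt (fun v => poleResidueObjective G lam (Function.update l i v) ρ)
      (dotProductCLM
        ((2 : 𝕜) • ((poleResidueTransfer lam l ρ (-lam i) - G (-lam i)) *ᵥ ρ i))) (l i) :=
  hasFDerivAt_comp_update (hasFDerivAt_poleResidueObjective G lam l ρ) i

end Derivative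

/-- Derivative of the pole–residue H2 objective with respect to a left residue
direction: `F̂ = −2 Σᵢ lᵢᵀ G(−λᵢ) rᵢ + Σⱼₖ (lⱼᵀ lₖ)(rₖᵀ rⱼ)/(−λⱼ − λₖ)`, viewed as a
function of `lᵢ` alone, is differentiable at `lᵢ` with derivative the linear
functional `v ↦ 2 rᵢᵀ (H_r(−λᵢ) − G(−λᵢ))ᵀ v`. -/
theorem stmt_12 {n m r : ℕ} (A : Matrix (Fin n) (Fin n) ℝ) (hA : IsHurwitz A)
    (B : Matrix (Fin n) (Fin m) ℝ) (C : Matrix (Fin m) (Fin n) ℝ)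
    (G : ℂ → Matrix (Fin m) (Fin m) ℂ)
    (hG : ∀ s : ℂ, s ∉ spectrum ℂ (A.map Complex.ofReal) →
      G s = C.map Complex.ofReal *
        (s • (1 : Matrix (Fin n) (Fin n) ℂ) - A.map Complex.ofReal)⁻¹ *
        B.map Complex.ofReal)
    (lam : Fin r → ℂ)
    (hdist : Function.Injective lam)
    (hstab : ∀ i, (lam i).re < 0)
    (hsum : ∀ j k, lam j + lam k ≠ 0)
    (l ρ : Fin r → (Fin m → ℂ))
    (Hr : ℂ → Matrix (Fin m) (Fin m) ℂ)
    (hHr : ∀ s : ℂ, Hr s = ∑ k : Fin r, (s - lam k)⁻¹ • Matrix.vecMulVec (l k) (ρ k))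
    (i : Fin r) :
    ∃ f' : (Fin m → ℂ) →L[ℂ] ℂ,
      HasFDerivAt (fun v : Fin m → ℂ =>
          -2 * ∑ i' : Fin r,
              (Function.update l i v) i' ⬝ᵥ (G (-(lam i')) *ᵥ ρ i') +
            ∑ j : Fin r, ∑ k : Fin r,
              ((Function.update l i v) j ⬝ᵥ (Function.update l i v) k) * (ρ k ⬝ᵥ ρ j) /
                (-(lam j) - lam k))
        f' (l i) ∧
      ∀ v : Fin m → ℂ,
        f' v = 2 * (ρ i ⬝ᵥ ((Hr (-(lam i)) - G (-(lam i)))ᵀ *ᵥ v)) := by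
  obtain rfl : Hr = poleResidueTransfer lam l ρ := funext hHr
  refine ⟨_, stmt_12_general G lam hsum l ρ i, fun v => ?_⟩
  rw [dotProductCLM_apply, smul_dotProduct, smul_eq_mul, dotProduct_transpose_mulVec,
    dotProduct_comm v]
end
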